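/- arXiv:2411.15230 — 3 statements merged into one kernel-verified Lean document; each statement's English description precedes it below -/
import Mathlib

section
/- Let n ≥ 1, let C : [0,1]^n → {0,1} be a collaboration strategy, and let k ∈ [n]. Suppose there exists a tuple (p_1, …, p_n) ∈ (0,1)^n with p_k ≠ 1/2 such that C(p_1, …, p_n) ≠ round(p_k). Then there exists a collaboration setting S_k such that acc_k(S_k) > acc_C(S_k), and acc_i(S_k) ≥ acc_C(S_k) for all i ∈ [n] with i ≠ k. -/
open Finset

noncomputable def rnd (p : ℝ) : Bool := if (1/2 : ℝ) ≤ p then true else false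

structure CollabSetting (n : ℕ) where
  X : Type
  [finX : Fintype X]
  D : X × Bool → ℝ
  D_nonneg : ∀ z, 0 ≤ D z
  D_sum_one : ∑ z : X × Bool, D z = 1
  P : Fin n → X → ℝ
  P_mem : ∀ i x, 0 ≤ P i x ∧ P i x ≤ 1
  calibrated : ∀ (i : Fin n) (p : ℝ),
      0 < (∑ z : X × Bool, if P i z.1 = p then D z else 0) →
      (∑ z : X × Bool, if P i z.1 = p ∧ z.2 = true then D z else 0)
        = p * (∑ z : X × Bool, if P i z.1 = p then D z else 0)

attribute [instance] CollabSetting.finX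

noncomputable def acc {n : ℕ} (S : CollabSetting n) (Yhat : S.X → Bool) : ℝ :=
  ∑ z : S.X × Bool, if Yhat z.1 = z.2 then S.D z else 0

noncomputable def accAgent {n : ℕ} (S : CollabSetting n) (i : Fin n) : ℝ :=
  acc S (fun x => rnd (S.P i x))

noncomputable def accStrat {n : ℕ} (S : CollabSetting n) (C : (Fin n → ℝ) → Bool) : ℝ :=
  acc S (fun x => C (fun i => S.P i x))

/-! Let `b` be the label that agent `k` predicts at `p`, and put unit weight on a point where the
forecasts are `p` and the label is `b`. Each agent `j` gets one more point, with the opposite label,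
where `j` still forecasts `p j` and everybody else is certain of the truth; its weight is the odds
against `b` under `p j`, which is exactly what calibrates agent `j`. The strategy errs on the unit
weight. An agent rounding to `b` errs only on its own point, whose weight is at most one, and
strictly less if its forecast is not `1/2`; an agent rounding the other way errs only on the unit
weight. -/

section DeterministicLabels

variable {X : Type} [Fintype X] {n : ℕ}

/-- The distribution on `X × Bool` whose marginal on `X` is proportional to the weights `w` and
whose label is the function `l` of the point. -/
noncomputable def labelledMass (w : X → ℝ) (l : X → Bool) (z : X × Bool) : ℝ :=
  if l z.1 = z.2 then w z.1 / ∑ x, w x else 0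

/-- The unnormalised weight of the points that the classifier `Y` mislabels. -/
def errorWeight (w : X → ℝ) (l Y : X → Bool) : ℝ := ∑ x with Y x ≠ l x, w x

lemma sum_ite_labelledMass (w : X → ℝ) (l : X → Bool) (Q : X × Bool → Prop) [DecidablePred Q] :
    (∑ z, if Q z then labelledMass w l z else 0) = (∑ x with Q (x, l x), w x) / ∑ x, w x := by
  rw [Fintype.sum_prod_type, sum_filter, sum_div]
  refine sum_congr rfl fun x _ => ?_
  rw [Fintype.sum_bool]
  cases h : l x <;> simp [labelledMass, h, ite_div]

lemma sum_label_eq_mul_sum {w : X → ℝ} {l : X → Bool} {f : X → ℝ} {t : ℝ}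
    (h : ∑ x with f x = t, w x * ((l x).toNat - f x) = 0) :
    ∑ x with f x = t ∧ l x = true, w x = t * ∑ x with f x = t, w x := by
  rw [← sub_eq_zero, ← h, mul_sum, ← filter_filter, sum_filter (fun x => l x = true),
    ← sum_sub_distrib]
  refine sum_congr rfl fun x hx => ?_
  rw [(mem_filter.mp hx).2]
  cases l x <;> simp <;> ring

/-- The collaboration setting with distribution `labelledMass w l` and predictors `P`. Calibration
is expressed by the residuals: on each level set of a predictor their weighted sum is zero. -/
noncomputable def CollabSetting.ofLabels (w : X → ℝ) (l : X → Bool) (P : Fin n → X → ℝ)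
    (hw : ∀ x, 0 ≤ w x) (hpos : 0 < ∑ x, w x) (hP : ∀ i x, P i x ∈ Set.Icc (0 : ℝ) 1)
    (hcal : ∀ i t, ∑ x with P i x = t, w x * ((l x).toNat - P i x) = 0) : CollabSetting n where
  X := X
  D := labelledMass w l
  D_nonneg z := ite_nonneg (div_nonneg (hw z.1) hpos.le) le_rfl
  D_sum_one := by
    simpa [div_self hpos.ne'] using sum_ite_labelledMass w l (fun _ => True)
  P := P
  P_mem := hP
  calibrated i t _ := by
    rw [sum_ite_labelledMass w l (fun z => P i z.1 = t ∧ z.2 = true),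
      sum_ite_labelledMass w l (fun z => P i z.1 = t), sum_label_eq_mul_sum (hcal i t),
      mul_div_assoc]

variable {w : X → ℝ} {l : X → Bool} {P : Fin n → X → ℝ}
  {hw : ∀ x, 0 ≤ w x} {hpos : 0 < ∑ x, w x} {hP : ∀ i x, P i x ∈ Set.Icc (0 : ℝ) 1}
  {hcal : ∀ i t, ∑ x with P i x = t, w x * ((l x).toNat - P i x) = 0}

lemma acc_ofLabels (Y : X → Bool) :
    acc (.ofLabels w l P hw hpos hP hcal) Y = 1 - errorWeight w l Y / ∑ x, w x := by
  have hsplit : ∑ x with Y x = l x, w x + errorWeight w l Y = ∑ x, w x :=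
    sum_filter_add_sum_filter_not univ (fun x => Y x = l x) w
  calc acc (.ofLabels w l P hw hpos hP hcal) Y
      = (∑ x with Y x = l x, w x) / ∑ x, w x :=
        sum_ite_labelledMass w l (fun z => Y z.1 = z.2)
    _ = 1 - errorWeight w l Y / ∑ x, w x := by
        rw [eq_sub_of_add_eq hsplit, sub_div, div_self hpos.ne']

lemma acc_ofLabels_le_iff {Y Y' : X → Bool} :
    acc (.ofLabels w l P hw hpos hP hcal) Y ≤ acc (.ofLabels w l P hw hpos hP hcal) Y' ↔
      errorWeight w l Y' ≤ errorWeight w l Y := by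
  rw [acc_ofLabels, acc_ofLabels, sub_le_sub_iff_left, div_le_div_iff_of_pos_right hpos]

lemma acc_ofLabels_lt_iff {Y Y' : X → Bool} :
    acc (.ofLabels w l P hw hpos hP hcal) Y < acc (.ofLabels w l P hw hpos hP hcal) Y' ↔
      errorWeight w l Y' < errorWeight w l Y := by
  simp only [← not_le, acc_ofLabels_le_iff]

end DeterministicLabels

/-- The odds against the label `b` when the label `true` has probability `q`. -/
noncomputable def oddsAgainst : Bool → ℝ → ℝ
  | true, q => (1 - q) / q
  | false, q => q / (1 - q)

lemma oddsAgainst_nonneg (b : Bool) {q : ℝ} (hq : q ∈ Set.Icc (0 : ℝ) 1) :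
    0 ≤ oddsAgainst b q := by
  cases b
  · exact div_nonneg hq.1 (sub_nonneg.2 hq.2)
  · exact div_nonneg (sub_nonneg.2 hq.2) hq.1

lemma oddsAgainst_rnd_lt_one {q : ℝ} (hq : q ≠ 1 / 2) : oddsAgainst (rnd q) q < 1 := by
  rcases hq.lt_or_gt with hlt | hgt
  · rw [rnd, if_neg hlt.not_ge, oddsAgainst, div_lt_one] <;> linarith
  · rw [rnd, if_pos hgt.le, oddsAgainst, div_lt_one] <;> linarith

lemma oddsAgainst_rnd_le_one (q : ℝ) : oddsAgainst (rnd q) q ≤ 1 := by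
  obtain rfl | hq := eq_or_ne q (1 / 2)
  · norm_num [rnd, oddsAgainst]
  · exact (oddsAgainst_rnd_lt_one hq).le

lemma residual_add_oddsAgainst_mul_residual {b : Bool} {q : ℝ} (hq : q ≠ (!b).toNat) :
    (b.toNat - q) + oddsAgainst b q * ((!b).toNat - q) = 0 := by
  cases b
  · have : 1 - q ≠ 0 := sub_ne_zero.2 (by simpa using hq.symm)
    simp [oddsAgainst, this]
  · have : q ≠ 0 := by simpa using hq
    simp [oddsAgainst, this]

lemma rnd_toNat (b : Bool) : rnd b.toNat = b := by
  cases b <;> norm_num [rnd]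

section Adversary

variable {n : ℕ} {b : Bool} {p : Fin n → ℝ}

/-- The weights of the adversarial setting: `none` is the point of disagreement and `some j` the
point that calibrates agent `j`. -/
noncomputable def adversaryWeight (b : Bool) (p : Fin n → ℝ) (x : Option (Fin n)) : ℝ :=
  x.elim 1 fun j => oddsAgainst b (p j)

/-- The labels of the adversarial setting: `b` at the point of disagreement, `!b` elsewhere. -/
def adversaryLabel (b : Bool) (x : Option (Fin n)) : Bool :=
  x.elim b fun _ => !b

/-- The forecasts of the adversarial setting: agent `i` forecasts `p i` at the point of disagreement
and at its own point, and is certain of the true label `!b` at all other points. -/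
noncomputable def adversaryForecast (b : Bool) (p : Fin n → ℝ) (i : Fin n)
    (x : Option (Fin n)) : ℝ :=
  x.elim (p i) fun j => if j = i then p i else (!b).toNat

lemma adversaryWeight_nonneg (hp : ∀ i, p i ∈ Set.Icc (0 : ℝ) 1) (x : Option (Fin n)) :
    0 ≤ adversaryWeight b p x := by
  cases x with
  | none => exact zero_le_one
  | some j => exact oddsAgainst_nonneg b (hp j)

lemma sum_adversaryWeight_pos (hp : ∀ i, p i ∈ Set.Icc (0 : ℝ) 1) :
    0 < ∑ x, adversaryWeight b p x :=
  sum_pos' (fun x _ => adversaryWeight_nonneg hp x) ⟨none, mem_univ _, zero_lt_one⟩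

lemma adversaryForecast_mem_Icc (hp : ∀ i, p i ∈ Set.Icc (0 : ℝ) 1) (i : Fin n)
    (x : Option (Fin n)) : adversaryForecast b p i x ∈ Set.Icc (0 : ℝ) 1 := by
  cases x with
  | none => exact hp i
  | some j =>
    by_cases hj : j = i
    · simpa [adversaryForecast, hj] using hp i
    · cases b <;> simp [adversaryForecast, hj]

lemma sum_adversaryWeight_mul_residual_eq_zero {i : Fin n} (hpi : p i ≠ (!b).toNat) (t : ℝ) :
    ∑ x with adversaryForecast b p i x = t,
      adversaryWeight b p x * ((adversaryLabel b x).toNat - adversaryForecast b p i x) = 0 := by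
  rw [sum_filter, Fintype.sum_option, Fintype.sum_eq_single i]
  · by_cases ht : p i = t
    · simpa [adversaryForecast, adversaryWeight, adversaryLabel, ht]
        using residual_add_oddsAgainst_mul_residual hpi
    · simp [adversaryForecast, ht]
  · intro j hj
    simp [adversaryForecast, adversaryLabel, hj]

/-- The adversarial setting, on which no strategy that answers something other than `b` at `p` beats
any of the agents. -/
noncomputable def adversary (b : Bool) (p : Fin n → ℝ) (hp : ∀ i, p i ∈ Set.Icc (0 : ℝ) 1)
    (hpb : ∀ i, p i ≠ (!b).toNat) : CollabSetting n :=
  .ofLabels (adversaryWeight b p) (adversaryLabel b) (adversaryForecast b p)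
    (adversaryWeight_nonneg hp) (sum_adversaryWeight_pos hp) (adversaryForecast_mem_Icc hp)
    fun i => sum_adversaryWeight_mul_residual_eq_zero (hpb i)

lemma one_le_errorWeight_adversary (hp : ∀ i, p i ∈ Set.Icc (0 : ℝ) 1)
    {Y : Option (Fin n) → Bool} (hY : Y none ≠ b) :
    1 ≤ errorWeight (adversaryWeight b p) (adversaryLabel b) Y :=
  single_le_sum (f := adversaryWeight b p) (fun x _ => adversaryWeight_nonneg hp x)
    (mem_filter.2 ⟨mem_univ none, hY⟩)

lemma errorWeight_adversary_of_rnd_eq {i : Fin n} (hi : rnd (p i) = b) :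
    errorWeight (adversaryWeight b p) (adversaryLabel b) (fun x => rnd (adversaryForecast b p i x))
      = oddsAgainst b (p i) := by
  have herr (x) : rnd (adversaryForecast b p i x) ≠ adversaryLabel b x ↔ x = some i := by
    rcases x with _ | j
    · simp [adversaryForecast, adversaryLabel, hi]
    · by_cases hj : j = i <;> simp [adversaryForecast, adversaryLabel, hj, hi, rnd_toNat]
  rw [errorWeight, filter_congr fun x _ => herr x, sum_filter, Fintype.sum_ite_eq', adversaryWeight,
    Option.elim]

lemma errorWeight_adversary_of_rnd_ne {i : Fin n} (hi : rnd (p i) ≠ b) :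
    errorWeight (adversaryWeight b p) (adversaryLabel b) (fun x => rnd (adversaryForecast b p i x))
      = 1 := by
  have herr (x) : rnd (adversaryForecast b p i x) ≠ adversaryLabel b x ↔ x = none := by
    rcases x with _ | j
    · simp [adversaryForecast, adversaryLabel, hi]
    · by_cases hj : j = i <;>
        simp [adversaryForecast, adversaryLabel, hj, Bool.eq_not.2 hi, rnd_toNat]
  rw [errorWeight, filter_congr fun x _ => herr x, sum_filter, Fintype.sum_ite_eq', adversaryWeight,
    Option.elim]

variable {C : (Fin n → ℝ) → Bool} (hp : ∀ i, p i ∈ Set.Icc (0 : ℝ) 1)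
  (hpb : ∀ i, p i ≠ (!b).toNat)

lemma accStrat_adversary_le_accAgent (hC : C p ≠ b) (i : Fin n) :
    accStrat (adversary b p hp hpb) C ≤ accAgent (adversary b p hp hpb) i := by
  refine acc_ofLabels_le_iff.2 (le_trans ?_ (one_le_errorWeight_adversary hp hC))
  by_cases hi : rnd (p i) = b
  · exact (errorWeight_adversary_of_rnd_eq hi).trans_le (hi ▸ oddsAgainst_rnd_le_one (p i))
  · exact (errorWeight_adversary_of_rnd_ne hi).le

lemma accStrat_adversary_lt_accAgent (hC : C p ≠ b) {i : Fin n} (hi : rnd (p i) = b)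
    (hpi : p i ≠ 1 / 2) :
    accStrat (adversary b p hp hpb) C < accAgent (adversary b p hp hpb) i := by
  refine acc_ofLabels_lt_iff.2 (lt_of_lt_of_le ?_ (one_le_errorWeight_adversary hp hC))
  exact (errorWeight_adversary_of_rnd_eq hi).trans_lt (hi ▸ oddsAgainst_rnd_lt_one hpi)

end Adversary

theorem stmt_2_general {n : ℕ} {C : (Fin n → ℝ) → Bool} {k : Fin n} {p : Fin n → ℝ}
    (hp : ∀ i, p i ∈ Set.Icc (0 : ℝ) 1) (hpb : ∀ i, p i ≠ (!rnd (p k)).toNat)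
    (hpk : p k ≠ 1 / 2) (hC : C p ≠ rnd (p k)) :
    ∃ S : CollabSetting n, accStrat S C < accAgent S k ∧ ∀ i, accStrat S C ≤ accAgent S i :=
  ⟨adversary (rnd (p k)) p hp hpb, accStrat_adversary_lt_accAgent hp hpb hC rfl hpk,
    accStrat_adversary_le_accAgent hp hpb hC⟩

/-- An adversarial setting from a single disagreement point. -/
theorem stmt_2 (n : ℕ) (hn : 1 ≤ n) (C : (Fin n → ℝ) → Bool) (k : Fin n)
    (p : Fin n → ℝ) (hp : ∀ i, p i ∈ Set.Ioo (0 : ℝ) 1)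
    (hpk : p k ≠ 1/2) (hC : C p ≠ rnd (p k)) :
    ∃ S : CollabSetting n,
      accStrat S C < accAgent S k ∧
      (∀ i : Fin n, i ≠ k → accStrat S C ≤ accAgent S i) := by
  have hpb (i : Fin n) : p i ≠ (!rnd (p k)).toNat := by
    cases rnd (p k)
    · simpa using (hp i).2.ne
    · simpa using (hp i).1.ne'
  obtain ⟨S, hk, hS⟩ := stmt_2_general (fun i => Set.Ioo_subset_Icc_self (hp i)) hpb hpk hC
  exact ⟨S, hk, fun i _ => hS i⟩
end

section
/- Let n ≥ 2, let k ∈ [n], and let C : [0,1]^n → {0,1} be a collaboration strategy such that C(p_1, …, p_n) = round(p_k) for every (p_1, …, p_n) ∈ (0,1)^n with p_k ≠ 1/2. Then there exists a collaboration setting S_1 such that acc_C(S_1) = acc_k(S_1) and acc_C(S_1) < acc_i(S_1) for every i ∈ [n] with i ≠ k. -/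
open Finset

/-!
Let agent `k` know only the overall probability of the label `1`, while every other agent knows the
conditional probability of the label given the point. Agent `k` then predicts a constant different
from `1/2` in `(0,1)`, so the strategy always agrees with agent `k`. All the others use the Bayes
classifier, which is strictly more accurate as soon as the constant prediction rounds the wrong way
at some point of positive mass.
-/

/-- The probability of the label `b` when the label `true` has probability `q`. -/
def labelProb (q : ℝ) : Bool → ℝ
  | true => q
  | false => 1 - q

lemma labelProb_nonneg {q : ℝ} (hq : q ∈ Set.Icc 0 1) : ∀ b, 0 ≤ labelProb q b
  | true => hq.1
  | false => sub_nonneg.2 hq.2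

lemma sum_labelProb (q : ℝ) : ∑ b, labelProb q b = 1 := by
  simp [labelProb]

lemma labelProb_lt_labelProb_rnd {q : ℝ} {b : Bool} (hq : q ≠ 1 / 2) (hb : b ≠ rnd q) :
    labelProb q b < labelProb q (rnd q) := by
  obtain hlt | hgt := hq.lt_or_gt
  · have hr : rnd q = false := if_neg hlt.not_ge
    obtain rfl : b = true := by simpa [hr] using hb
    simp only [hr, labelProb]
    linarith
  · have hr : rnd q = true := if_pos hgt.le
    obtain rfl : b = false := by simpa [hr] using hb
    simp only [hr, labelProb]
    linarith

lemma labelProb_le_labelProb_rnd (q : ℝ) (b : Bool) : labelProb q b ≤ labelProb q (rnd q) := by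
  obtain rfl | hb := eq_or_ne b (rnd q)
  · rfl
  obtain rfl | hq := eq_or_ne q (1 / 2)
  · cases b <;> cases rnd (1 / 2) <;> norm_num [labelProb]
  · exact (labelProb_lt_labelProb_rnd hq hb).le

section Regression

variable {X : Type*} [Fintype X] {μ η : X → ℝ}

/-- The joint law of a point drawn with weights `μ` and a label that, given the point `x`, is `true`
with probability `η x`. -/
noncomputable def jointWeight (μ η : X → ℝ) (z : X × Bool) : ℝ :=
  μ z.1 * labelProb (η z.1) z.2

lemma sum_jointWeight_ite (μ η : X → ℝ) (p : X → Prop) [DecidablePred p] :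
    (∑ z : X × Bool, if p z.1 then jointWeight μ η z else 0) = ∑ x with p x, μ x := by
  simp only [Fintype.sum_prod_type, sum_filter, jointWeight]
  refine sum_congr rfl fun x _ ↦ ?_
  split_ifs
  · rw [← mul_sum, sum_labelProb, mul_one]
  · exact sum_const_zero

lemma sum_jointWeight_ite_and_true (μ η : X → ℝ) (p : X → Prop) [DecidablePred p] :
    (∑ z : X × Bool, if p z.1 ∧ z.2 = true then jointWeight μ η z else 0) =
      ∑ x with p x, μ x * η x := by
  simp [Fintype.sum_prod_type, sum_filter, jointWeight, labelProb]

lemma sum_jointWeight_ite_eq (μ η : X → ℝ) (f : X → Bool) :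
    (∑ z : X × Bool, if f z.1 = z.2 then jointWeight μ η z else 0) =
      ∑ x, μ x * labelProb (η x) (f x) := by
  simp [Fintype.sum_prod_type, jointWeight]

lemma sum_mul_labelProb_lt_sum_mul_labelProb_rnd {f : X → Bool} {x : X} (hμ : ∀ y, 0 ≤ μ y)
    (hμx : 0 < μ x) (hηx : η x ≠ 1 / 2) (hfx : f x ≠ rnd (η x)) :
    ∑ y, μ y * labelProb (η y) (f y) < ∑ y, μ y * labelProb (η y) (rnd (η y)) :=
  sum_lt_sum
    (fun y _ ↦ mul_le_mul_of_nonneg_left (labelProb_le_labelProb_rnd (η y) (f y)) (hμ y))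
    ⟨x, mem_univ x, mul_lt_mul_of_pos_left (labelProb_lt_labelProb_rnd hηx hfx) hμx⟩

/-- The predictor `P` is calibrated on the joint law `jointWeight μ η`. Null level sets are
included: for nonnegative `μ` both sides vanish there. -/
def IsCalibrated (μ η P : X → ℝ) : Prop :=
  ∀ p, ∑ x with P x = p, μ x * η x = p * ∑ x with P x = p, μ x

lemma isCalibrated_self (μ η : X → ℝ) : IsCalibrated μ η η := by
  intro p
  rw [mul_sum]
  refine sum_congr rfl fun x hx ↦ ?_
  rw [(mem_filter.1 hx).2, mul_comm]

lemma isCalibrated_const_mean (hμ : ∑ x, μ x = 1) :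
    IsCalibrated μ η fun _ ↦ ∑ x, μ x * η x := by
  intro p
  by_cases hp : ∑ x, μ x * η x = p <;> simp [hp, hμ]

end Regression

section OneUninformed

variable {ι X : Type*} [DecidableEq ι] [Fintype X] {μ η : X → ℝ}

/-- Agent `k` predicts the mean of `η`, all other agents predict `η` itself. -/
noncomputable def oneUninformed (μ η : X → ℝ) (k : ι) : ι → X → ℝ :=
  Function.update (fun _ ↦ η) k fun _ ↦ ∑ x, μ x * η x

lemma oneUninformed_self (μ η : X → ℝ) (k : ι) :
    oneUninformed μ η k k = fun _ ↦ ∑ x, μ x * η x :=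
  Function.update_self ..

lemma oneUninformed_of_ne (μ η : X → ℝ) {k i : ι} (hi : i ≠ k) : oneUninformed μ η k i = η :=
  Function.update_of_ne hi ..

lemma oneUninformed_mem {s : Set ℝ} (hs : Convex ℝ s) (hμ : μ ∈ stdSimplex ℝ X)
    (hη : ∀ x, η x ∈ s) (k i : ι) (x : X) : oneUninformed μ η k i x ∈ s := by
  obtain rfl | hi := eq_or_ne i k
  · rw [oneUninformed_self]
    exact hs.sum_mem (fun y _ ↦ hμ.1 y) hμ.2 fun y _ ↦ hη y
  · rw [oneUninformed_of_ne μ η hi]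
    exact hη x

lemma isCalibrated_oneUninformed (hμ : ∑ x, μ x = 1) (k i : ι) :
    IsCalibrated μ η (oneUninformed μ η k i) := by
  obtain rfl | hi := eq_or_ne i k
  · rw [oneUninformed_self]
    exact isCalibrated_const_mean hμ
  · rw [oneUninformed_of_ne μ η hi]
    exact isCalibrated_self μ η

end OneUninformed

namespace CollabSetting

variable {n : ℕ}

lemma accStrat_eq_accAgent (S : CollabSetting n) {k : Fin n} {C : (Fin n → ℝ) → Bool}
    (hC : ∀ p : Fin n → ℝ, (∀ i, p i ∈ Set.Ioo (0 : ℝ) 1) → p k ≠ 1 / 2 → C p = rnd (p k))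
    (hP : ∀ i x, S.P i x ∈ Set.Ioo (0 : ℝ) 1) (hPk : ∀ x, S.P k x ≠ 1 / 2) :
    accStrat S C = accAgent S k :=
  congrArg (acc S) <| funext fun x ↦ hC _ (fun i ↦ hP i x) (hPk x)

variable {X : Type} [Fintype X] {μ η : X → ℝ}

/-- The setting with joint law `jointWeight μ η` and the given calibrated predictors. -/
noncomputable def ofRegression (hμ : μ ∈ stdSimplex ℝ X) (hη : ∀ x, η x ∈ Set.Icc 0 1)
    (P : Fin n → X → ℝ) (hP : ∀ i x, P i x ∈ Set.Icc 0 1) (hcal : ∀ i, IsCalibrated μ η (P i)) :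
    CollabSetting n where
  X := X
  D := jointWeight μ η
  D_nonneg z := mul_nonneg (hμ.1 z.1) (labelProb_nonneg (hη z.1) z.2)
  D_sum_one := by simpa [hμ.2] using sum_jointWeight_ite μ η fun _ ↦ True
  P := P
  P_mem := hP
  calibrated i p _ := by
    rw [sum_jointWeight_ite_and_true μ η (P i · = p), sum_jointWeight_ite μ η (P i · = p)]
    exact hcal i p

lemma accAgent_ofRegression (hμ : μ ∈ stdSimplex ℝ X) (hη : ∀ x, η x ∈ Set.Icc 0 1)
    {P : Fin n → X → ℝ} (hP : ∀ i x, P i x ∈ Set.Icc 0 1) (hcal : ∀ i, IsCalibrated μ η (P i))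
    (i : Fin n) :
    accAgent (ofRegression hμ hη P hP hcal) i = ∑ x, μ x * labelProb (η x) (rnd (P i x)) :=
  sum_jointWeight_ite_eq μ η fun x ↦ rnd (P i x)

/-- The setting in which agent `k` knows only the mean of `η` and every other agent knows `η`. -/
noncomputable def ofOneUninformed (hμ : μ ∈ stdSimplex ℝ X) (hη : ∀ x, η x ∈ Set.Icc 0 1)
    (k : Fin n) : CollabSetting n :=
  ofRegression hμ hη (oneUninformed μ η k) (oneUninformed_mem (convex_Icc 0 1) hμ hη k)
    (isCalibrated_oneUninformed hμ.2 k)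

lemma accAgent_ofOneUninformed_lt (hμ : μ ∈ stdSimplex ℝ X) (hη : ∀ x, η x ∈ Set.Icc 0 1)
    {k i : Fin n} (hi : i ≠ k) {x : X} (hμx : 0 < μ x) (hηx : η x ≠ 1 / 2)
    (hx : rnd (∑ y, μ y * η y) ≠ rnd (η x)) :
    accAgent (ofOneUninformed hμ hη k) k < accAgent (ofOneUninformed hμ hη k) i := by
  simp only [ofOneUninformed, accAgent_ofRegression, oneUninformed_self, oneUninformed_of_ne μ η hi]
  exact sum_mul_labelProb_lt_sum_mul_labelProb_rnd hμ.1 hμx hηx hx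

lemma accStrat_ofOneUninformed_eq_accAgent (hμ : μ ∈ stdSimplex ℝ X) (hη : ∀ x, η x ∈ Set.Ioo 0 1)
    (hmean : ∑ x, μ x * η x ≠ 1 / 2) {k : Fin n} {C : (Fin n → ℝ) → Bool}
    (hC : ∀ p : Fin n → ℝ, (∀ i, p i ∈ Set.Ioo (0 : ℝ) 1) → p k ≠ 1 / 2 → C p = rnd (p k)) :
    accStrat (ofOneUninformed hμ (fun x ↦ Set.Ioo_subset_Icc_self (hη x)) k) C =
      accAgent (ofOneUninformed hμ (fun x ↦ Set.Ioo_subset_Icc_self (hη x)) k) k := by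
  refine accStrat_eq_accAgent _ hC (oneUninformed_mem (convex_Ioo 0 1) hμ hη k) fun _ ↦ ?_
  change oneUninformed μ η k k _ ≠ 1 / 2
  rwa [oneUninformed_self]

end CollabSetting

/-- For a strategy deferring to agent k, there is a setting where
C ties agent k and is strictly worse than every other agent. -/
theorem stmt_5 (n : ℕ) (hn : 2 ≤ n) (k : Fin n) (C : (Fin n → ℝ) → Bool)
    (hdefer : ∀ p : Fin n → ℝ,
      (∀ i, p i ∈ Set.Ioo (0 : ℝ) 1) → p k ≠ 1/2 → C p = rnd (p k)) :
    ∃ S : CollabSetting n,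
      accStrat S C = accAgent S k ∧
      (∀ i : Fin n, i ≠ k → accStrat S C < accAgent S i) := by
  let μ : Bool → ℝ := fun _ ↦ 1 / 2
  let η : Bool → ℝ := fun x ↦ if x then 4 / 5 else 2 / 5
  have hμ : μ ∈ stdSimplex ℝ Bool := ⟨fun _ ↦ by norm_num [μ], by norm_num [μ]⟩
  have hη : ∀ x, η x ∈ Set.Ioo 0 1 := by rintro (_ | _) <;> norm_num [η]
  have hmean : ∑ x, μ x * η x = 3 / 5 := by norm_num [μ, η]
  have hlow : η false = 2 / 5 := rfl
  have htie := CollabSetting.accStrat_ofOneUninformed_eq_accAgent hμ hη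
    (by rw [hmean]; norm_num) hdefer
  refine ⟨_, htie, fun i hi ↦ htie.trans_lt ?_⟩
  refine CollabSetting.accAgent_ofOneUninformed_lt hμ _ hi (x := false) ?_ ?_ ?_
  · norm_num [μ]
  · norm_num [hlow]
  · rw [hmean, hlow]
    norm_num [rnd]
end

section
/- Let n ≥ 1 and let C : [0,1]^n → {0,1} be a collaboration strategy. Suppose that for every k ∈ [n] there exists a collaboration setting S_k such that acc_k(S_k) > acc_C(S_k) and acc_i(S_k) ≥ acc_C(S_k) for all i ∈ [n]. Then there exists a collaboration setting S such that acc_i(S) > acc_C(S) for every i ∈ [n]; in particular, C is not reliable. -/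
open Finset

/-! A convex combination of settings lives on the disjoint union of their domains. Calibration is an
identity linear in the distribution, so it survives mixing, while `C` and the agents only see
predictions, so each accuracy of the mixture is the average of the corresponding accuracies. In the
average over `k`, the weak inequalities `acc_C ≤ acc_i` persist and the strict one at `k = i` makes
the inequality for agent `i` strict. -/

theorem sum_sigma_prod_ite_mul {ι R Y : Type*} {X : ι → Type*} [Fintype ι] [∀ k, Fintype (X k)]
    [Fintype Y] [NonUnitalNonAssocSemiring R] (w : ι → R) (f : ∀ k, X k × Y → R)
    (q : (Σ k, X k) × Y → Prop) [DecidablePred q] :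
    (∑ z, if q z then w z.1.1 * f z.1.1 (z.1.2, z.2) else 0) =
      ∑ k, w k * ∑ z : X k × Y, if q (⟨k, z.1⟩, z.2) then f k z else 0 := by
  simp only [Fintype.sum_prod_type, Fintype.sum_sigma, mul_sum, mul_ite, mul_zero]

namespace CollabSetting

variable {n : ℕ}

theorem calibrated_at (S : CollabSetting n) (i : Fin n) (p : ℝ) :
    (∑ z : S.X × Bool, if S.P i z.1 = p ∧ z.2 = true then S.D z else 0) =
      p * ∑ z : S.X × Bool, if S.P i z.1 = p then S.D z else 0 := by
  have level_nonneg : ∀ z ∈ univ, 0 ≤ if S.P i z.1 = p then S.D z else 0 := fun z _ =>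
    ite_nonneg (S.D_nonneg z) le_rfl
  rcases (sum_nonneg level_nonneg).lt_or_eq with level_pos | level_null
  · exact S.calibrated i p level_pos
  · have D_eq_zero : ∀ z, S.P i z.1 = p → S.D z = 0 := fun z hz => by
      simpa only [if_pos hz] using
        (sum_eq_zero_iff_of_nonneg level_nonneg).1 level_null.symm z (mem_univ z)
    rw [← level_null, mul_zero]
    exact sum_eq_zero fun z _ => ite_eq_right_iff.2 fun hz => D_eq_zero z hz.1

variable {ι : Type} [Fintype ι]

/-- The convex combination of the settings `S k` with weights `w k`: draw `k` with probability
`w k`, then a labelled point from `S k`. Its domain is the disjoint union of the domains, and an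
agent sees only its own prediction, not the index `k`. -/
noncomputable def mixture (w : stdSimplex ℝ ι) (S : ι → CollabSetting n) : CollabSetting n where
  X := Σ k, (S k).X
  D z := w z.1.1 * (S z.1.1).D (z.1.2, z.2)
  D_nonneg z := mul_nonneg (w.2.1 _) ((S z.1.1).D_nonneg _)
  D_sum_one := by
    simpa only [if_true, D_sum_one, mul_one, stdSimplex.sum_eq_one] using
      sum_sigma_prod_ite_mul w (fun k => (S k).D) fun _ => True
  P i x := (S x.1).P i x.2
  P_mem i x := (S x.1).P_mem i x.2
  calibrated i p _ := by
    simp only [sum_sigma_prod_ite_mul w fun k => (S k).D, calibrated_at, mul_sum, mul_left_comm]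

theorem acc_mixture (w : stdSimplex ℝ ι) (S : ι → CollabSetting n)
    (Yhat : (mixture w S).X → Bool) :
    acc (mixture w S) Yhat = ∑ k, w k * acc (S k) fun x => Yhat ⟨k, x⟩ :=
  sum_sigma_prod_ite_mul w (fun k => (S k).D) fun z => Yhat z.1 = z.2

theorem accStrat_mixture (w : stdSimplex ℝ ι) (S : ι → CollabSetting n)
    (C : (Fin n → ℝ) → Bool) :
    accStrat (mixture w S) C = ∑ k, w k * accStrat (S k) C :=
  acc_mixture w S fun x => C fun i => (mixture w S).P i x

theorem accAgent_mixture (w : stdSimplex ℝ ι) (S : ι → CollabSetting n) (i : Fin n) :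
    accAgent (mixture w S) i = ∑ k, w k * accAgent (S k) i :=
  acc_mixture w S fun x => rnd ((mixture w S).P i x)

theorem accStrat_mixture_lt_accAgent {w : stdSimplex ℝ ι} {S : ι → CollabSetting n}
    {C : (Fin n → ℝ) → Bool} {i : Fin n} (hle : ∀ k, accStrat (S k) C ≤ accAgent (S k) i)
    (hlt : ∃ k, 0 < w k ∧ accStrat (S k) C < accAgent (S k) i) :
    accStrat (mixture w S) C < accAgent (mixture w S) i := by
  obtain ⟨k, hwk, hk⟩ := hlt
  rw [accStrat_mixture, accAgent_mixture]
  exact sum_lt_sum (fun j _ => mul_le_mul_of_nonneg_left (hle j) (w.2.1 j))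
    ⟨k, mem_univ k, mul_lt_mul_of_pos_left hk hwk⟩

end CollabSetting

/-- Gluing per-agent adversarial settings yields a setting where C is
strictly worse than every agent; in particular C is not reliable. -/
theorem stmt_7 (n : ℕ) (hn : 1 ≤ n) (C : (Fin n → ℝ) → Bool)
    (hadv : ∀ k : Fin n, ∃ S : CollabSetting n,
      accStrat S C < accAgent S k ∧ (∀ i : Fin n, accStrat S C ≤ accAgent S i)) :
    (∃ S : CollabSetting n, ∀ i : Fin n, accStrat S C < accAgent S i) ∧
    ¬ (∀ S : CollabSetting n, (⨅ i : Fin n, accAgent S i) ≤ accStrat S C) := by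
  have : Nonempty (Fin n) := ⟨⟨0, hn⟩⟩
  choose S hlt hle using hadv
  let T := CollabSetting.mixture stdSimplex.barycenter S
  have strat_lt_agent : ∀ i, accStrat T C < accAgent T i := fun i =>
    CollabSetting.accStrat_mixture_lt_accAgent (fun k => hle k i)
      ⟨i, inv_pos.2 (Nat.cast_pos.2 Fintype.card_pos), hlt i⟩
  refine ⟨⟨T, strat_lt_agent⟩, fun reliable => ?_⟩
  obtain ⟨i, hi⟩ := exists_eq_ciInf_of_finite (f := accAgent T)
  exact ((strat_lt_agent i).trans_eq hi).not_ge (reliable T)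
end
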